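/- Let λ ∈ 𝒫_C with distinct even parts 2x_1 > … > 2x_ℓ of multiplicities r_1, …, r_ℓ, and set B_λ = {0, 2x_1, …, 2x_ℓ}. For every even NCP 𝓛 of B_λ there exists an admissible domino tableau T of type C and shape λ such that the partition of B_λ into the fibers of b_T over the open clusters of T is exactly 𝓛. -/

import Mathlib

/-- A domino in the plane (rows and columns numbered from 1, matrix style):
`H i j` is the horizontal domino with boxes `(i,j)` and `(i,j+1)`;
`V i j` is the vertical domino with boxes `(i,j)` and `(i+1,j)`. -/
inductive Domino : Type
  | H : ℕ → ℕ → Domino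
  | V : ℕ → ℕ → Domino
deriving DecidableEq

/-- The two boxes of a domino. -/
def Domino.boxes : Domino → Finset (ℕ × ℕ)
  | .H i j => {(i, j), (i, j + 1)}
  | .V i j => {(i, j), (i + 1, j)}

/-- The boxes of a domino have row and column indices `≥ 1`. -/
def Domino.valid : Domino → Prop
  | .H i j => 1 ≤ i ∧ 1 ≤ j
  | .V i j => 1 ≤ i ∧ 1 ≤ j

/-- A domino of type `(I+)` (type C): vertical, lying in an even column. -/
def Domino.IsIPlus : Domino → Prop
  | .H _ _ => False
  | .V _ j => j % 2 = 0

/-- A domino tableau with `n` dominoes is encoded as a list of dominoes **in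
decreasing order of labels**: the head has label `n` and the last element has
label `1`; `T^i` (dominoes with labels `≤ i`) is `T.drop (n - i)`. -/
def boxesOf (T : List Domino) : Finset (ℕ × ℕ) :=
  T.foldr (fun d s => d.boxes ∪ s) ∅

/-- The length of row `i` of the tableau `T`. -/
def rowLen (T : List Domino) (i : ℕ) : ℕ :=
  ((boxesOf T).filter (fun p => p.1 = i)).card

/-- The shape of `T`: the multiset of (positive) row lengths, i.e. the partition
whose Young diagram is the set of boxes of `T`. -/
def shapeOf (T : List Domino) : Multiset ℕ :=
  ((boxesOf T).image Prod.fst).val.map (rowLen T)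

/-- The set of parts of the shape of `T`. -/
def partsFinset (T : List Domino) : Finset ℕ :=
  ((boxesOf T).image Prod.fst).image (rowLen T)

/-- The label of the box `p` in `T` (the head of `T` has the largest label
`T.length`; boxes outside `T` get the junk value `0`). -/
def labelOf : List Domino → ℕ × ℕ → ℕ
  | [], _ => 0
  | d :: rest, p => if p ∈ d.boxes then rest.length + 1 else labelOf rest p

/-- Van Leeuwen's clusters of an (admissible, type C) domino tableau `T`, by induction
on the number of dominoes. `(clusterData T).1` is the set of clusters, each cluster
being the `Finset` of the labels of its dominoes, and `(clusterData T).2` is the map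
`b_T`, sending each even number `2i` (an element of `B_λ = {0} ∪ {even parts}`) to a
cluster. If `T = [d]`, there is one cluster and `b_T` is constant. For `T = d :: rest`
with `d` the domino of maximal label `n`: if `d` is of type (N) in columns `2i−1, 2i`,
the clusters `b'(2i−2)`, `d` and (when `2i` is a part of the shape of `rest`) `b'(2i)`
merge into a new cluster; if `d` is of type (I+) in column `2i`, `d` and (when `2i` is
a part) `b'(2i)` merge; if `d` is of type (I−) in column `2i+1`, `d` and `b'(2i)`
merge. The untouched clusters and values of `b'` persist, and all members of `B_λ`
previously sent to a merged cluster (as well as `2i`, in the (N) and (I+) cases) are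
sent to the new cluster. -/
def clusterData : List Domino → Finset (Finset ℕ) × (ℕ → Finset ℕ)
  | [] => (∅, fun _ => ∅)
  | [_] => ({({1} : Finset ℕ)}, fun _ => ({1} : Finset ℕ))
  | d :: rest =>
      let P := clusterData rest
      let n := rest.length + 1
      match d with
      | .H _ j =>
          if j % 2 = 1 then
            -- type (N), columns j = 2i−1 and c = 2i
            let c := j + 1
            let olds : Finset (Finset ℕ) :=
              if c ∈ partsFinset rest then {P.2 (c - 2), P.2 c} else {P.2 (c - 2)}
            let newC : Finset ℕ :=
              insert n (if c ∈ partsFinset rest then P.2 (c - 2) ∪ P.2 c else P.2 (c - 2))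
            ((P.1 \ olds) ∪ {newC},
             fun m => if P.2 m ∈ olds ∨ m = c then newC else P.2 m)
          else P
      | .V _ j =>
          if j % 2 = 0 then
            -- type (I+), column c = 2i
            let c := j
            if c ∈ partsFinset rest then
              let newC : Finset ℕ := insert n (P.2 c)
              ((P.1 \ {P.2 c}) ∪ {newC},
               fun m => if P.2 m = P.2 c ∨ m = c then newC else P.2 m)
            else
              let newC : Finset ℕ := ({n} : Finset ℕ)
              (P.1 ∪ {newC}, fun m => if m = c then newC else P.2 m)
          else
            -- type (I−), column j = 2i+1, merge with b'(2i)
            let c := j - 1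
            let newC : Finset ℕ := insert n (P.2 c)
            ((P.1 \ {P.2 c}) ∪ {newC},
             fun m => if P.2 m = P.2 c then newC else P.2 m)

/-- The set of boxes is a Young diagram (rows/columns from 1, left- and top-justified). -/
def IsYoungDiagramSet (S : Finset (ℕ × ℕ)) : Prop :=
  (∀ p ∈ S, 1 ≤ p.1 ∧ 1 ≤ p.2) ∧
  (∀ i j, (i, j + 1) ∈ S → 1 ≤ j → (i, j) ∈ S) ∧
  (∀ i j, (i + 1, j) ∈ S → 1 ≤ i → (i, j) ∈ S)

/-- `T` (a list of dominoes in decreasing label order) is a standard domino tableau: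
the dominoes are pairwise disjoint, their union is a Young diagram, and the labels
weakly increase along rows and columns. -/
def IsStandardDT (T : List Domino) : Prop :=
  (∀ d ∈ T, d.valid) ∧
  T.Pairwise (fun d d' => Disjoint d.boxes d'.boxes) ∧
  IsYoungDiagramSet (boxesOf T) ∧
  (∀ i j, (i, j) ∈ boxesOf T → (i + 1, j) ∈ boxesOf T →
    labelOf T (i, j) ≤ labelOf T (i + 1, j)) ∧
  (∀ i j, (i, j) ∈ boxesOf T → (i, j + 1) ∈ boxesOf T →
    labelOf T (i, j) ≤ labelOf T (i, j + 1))

/-- A partition is of type C: it is a partition of an even number in which every odd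
part has even multiplicity. -/
def IsTypeCShape (μ : Multiset ℕ) : Prop :=
  Even μ.sum ∧ ∀ m, Odd m → Even (μ.count m)

/-- `T` is an admissible domino tableau of type C: it is standard, and the shape of
every `T^i` (here: of every suffix of the list) is of type C. -/
def IsAdmissibleC (T : List Domino) : Prop :=
  IsStandardDT T ∧ ∀ k, IsTypeCShape (shapeOf (T.drop k))

/-- `P` is a partition of the finite set `B ⊆ ℕ` into nonempty blocks. -/
def IsPartitionOf (B : Finset ℕ) (P : Finset (Finset ℕ)) : Prop :=
  (∀ L ∈ P, L.Nonempty) ∧ (∀ L ∈ P, L ⊆ B) ∧ ∀ b ∈ B, ∃! L, L ∈ P ∧ b ∈ L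

/-- The noncrossing condition on the blocks. -/
def PairwiseNoncrossing (P : Finset (Finset ℕ)) : Prop :=
  ∀ L ∈ P, ∀ L' ∈ P, L ≠ L' →
    ∀ a ∈ L, ∀ b ∈ L, ∀ c ∈ L', ∀ d ∈ L', a ≤ b → c ≤ d →
      Finset.Icc a b ∩ Finset.Icc c d = ∅ ∨
      Finset.Icc a b ⊆ Finset.Icc c d ∨ Finset.Icc c d ⊆ Finset.Icc a b

/-- A noncrossing partition (NCP) of the finite set `B ⊆ ℕ`. -/
def IsNCP (B : Finset ℕ) (P : Finset (Finset ℕ)) : Prop :=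
  IsPartitionOf B P ∧ PairwiseNoncrossing P

/-- `B_λ = {0, 2x₁, …, 2x_ℓ}` (indices `1, …, ℓ`). -/
def Blam (ℓ : ℕ) (x : ℕ → ℕ) : Finset ℕ :=
  insert 0 ((Finset.Icc 1 ℓ).image (fun i => 2 * x i))

/-- An even NCP of `B_λ`: an NCP such that every block `L` not containing `0` has
`r(L) = Σ_{j : 2x_j ∈ L} r_j` even (the block `L₀` containing `0` is unrestricted). -/
def IsEvenNCP (ℓ : ℕ) (x r : ℕ → ℕ) (P : Finset (Finset ℕ)) : Prop :=
  IsNCP (Blam ℓ x) P ∧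
    ∀ L ∈ P, 0 ∉ L →
      Even (∑ j ∈ (Finset.Icc 1 ℓ).filter (fun j => 2 * x j ∈ L), r j)

/-- The partition of `B_λ` into the fibers of the cluster map `b_T` (equivalently, over
the open clusters of `T`, which are exactly the clusters in the image of `b_T`). -/
def fibersOf (ℓ : ℕ) (x : ℕ → ℕ) (T : List Domino) : Finset (Finset ℕ) :=
  (Blam ℓ x).image
    (fun v => (Blam ℓ x).filter (fun w => (clusterData T).2 w = (clusterData T).2 v))


/-! ### Geometry of tableaux -/

lemma boxesOf_cons (d : Domino) (T : List Domino) :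
    boxesOf (d :: T) = d.boxes ∪ boxesOf T := rfl

lemma boxes_subset_of_mem {d : Domino} {T : List Domino} (h : d ∈ T) :
    d.boxes ⊆ boxesOf T := by
  induction T with
  | nil => simp at h
  | cons e T ih =>
    rw [boxesOf_cons]
    rcases List.mem_cons.1 h with rfl | h
    · exact Finset.subset_union_left
    · exact (ih h).trans Finset.subset_union_right

lemma labelOf_le (T : List Domino) (p : ℕ × ℕ) : labelOf T p ≤ T.length := by
  induction T with
  | nil => simp [labelOf]
  | cons e T ih =>
    rw [labelOf]
    split_ifs
    · simp
    · simp; omega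

/-- Adding a domino on top of a standard tableau. -/
lemma standard_cons {d : Domino} {T : List Domino} (hT : IsStandardDT T) (hd : d.valid)
    (hdis : Disjoint d.boxes (boxesOf T)) (hY : IsYoungDiagramSet (boxesOf (d :: T))) :
    IsStandardDT (d :: T) := by
  obtain ⟨h1, h2, h3, h4, h5⟩ := hT
  have hnot : ∀ p, p ∈ d.boxes → p ∉ boxesOf T := fun p hp hp' =>
    (Finset.disjoint_left.1 hdis) hp hp'
  refine ⟨?_, ?_, hY, ?_, ?_⟩
  · intro e he
    rcases List.mem_cons.1 he with rfl | he
    · exact hd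
    · exact h1 e he
  · rw [List.pairwise_cons]
    refine ⟨fun e he => ?_, h2⟩
    exact Finset.disjoint_of_subset_right (boxes_subset_of_mem he) hdis
  · intro i j hij hij'
    have hpos := hY.1 _ hij
    rw [boxesOf_cons, Finset.mem_union] at hij hij'
    have hl := labelOf_le T
    simp only [labelOf]
    by_cases ha : (i, j) ∈ d.boxes
    · have : (i + 1, j) ∈ d.boxes := by
        by_contra hb
        exact hnot _ ha (h3.2.2 i j (hij'.resolve_left hb) hpos.1)
      simp [ha, this]
    · by_cases hb : (i + 1, j) ∈ d.boxes
      · simp only [ha, hb, if_true, if_false]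
        have := hl (i, j)
        omega
      · simp only [ha, hb, if_false]
        exact h4 i j (hij.resolve_left ha) (hij'.resolve_left hb)
  · intro i j hij hij'
    have hpos := hY.1 _ hij
    rw [boxesOf_cons, Finset.mem_union] at hij hij'
    have hl := labelOf_le T
    simp only [labelOf]
    by_cases ha : (i, j) ∈ d.boxes
    · have : (i, j + 1) ∈ d.boxes := by
        by_contra hb
        exact hnot _ ha (h3.2.1 i j (hij'.resolve_left hb) hpos.2)
      simp [ha, this]
    · by_cases hb : (i, j + 1) ∈ d.boxes
      · simp only [ha, hb, if_true, if_false]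
        have := hl (i, j)
        omega
      · simp only [ha, hb, if_false]
        exact h5 i j (hij.resolve_left ha) (hij'.resolve_left hb)

/-- `T` fills the Young diagram with column heights `N`. -/
def Fills (T : List Domino) (N : ℕ → ℕ) : Prop :=
  ∀ i j, (i, j) ∈ boxesOf T ↔ 1 ≤ i ∧ 1 ≤ j ∧ i ≤ N j

/-- Column heights decrease. -/
def Anti (N : ℕ → ℕ) : Prop := ∀ j, 1 ≤ j → N (j + 1) ≤ N j

lemma Anti.le {N : ℕ → ℕ} (h : Anti N) {a b : ℕ} (ha : 1 ≤ a) (hab : a ≤ b) : N b ≤ N a := by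
  induction b, hab using Nat.le_induction with
  | base => exact le_rfl
  | succ b hb ih => exact (h b (by omega)).trans ih

lemma Fills.young {T : List Domino} {N : ℕ → ℕ} (h : Fills T N) (hN : Anti N) :
    IsYoungDiagramSet (boxesOf T) := by
  refine ⟨fun p hp => ?_, fun i j hij hj => ?_, fun i j hij hi => ?_⟩
  · have := (h p.1 p.2).1 hp
    exact ⟨this.1, this.2.1⟩
  · rw [h] at hij ⊢
    exact ⟨hij.1, hj, hij.2.2.trans (hN j hj)⟩
  · rw [h] at hij ⊢
    exact ⟨hi, hij.2.1, by omega⟩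

lemma Fills.rows {T : List Domino} {N : ℕ → ℕ} (h : Fills T N) (hN : Anti N) :
    (boxesOf T).image Prod.fst = Finset.Icc 1 (N 1) := by
  ext i
  simp only [Finset.mem_image, Finset.mem_Icc, Prod.exists, exists_and_right, exists_eq_right]
  constructor
  · rintro ⟨j, hj⟩
    rw [h] at hj
    exact ⟨hj.1, hj.2.2.trans (hN.le le_rfl hj.2.1)⟩
  · rintro ⟨h1, h2⟩
    exact ⟨1, (h i 1).2 ⟨h1, le_rfl, h2⟩⟩

lemma Fills.mem_iff_le_rowLen {T : List Domino} {N : ℕ → ℕ} (h : Fills T N) (hN : Anti N)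
    {i : ℕ} (hi : 1 ≤ i) {m : ℕ} (hm : 1 ≤ m) : m ≤ rowLen T i ↔ i ≤ N m := by
  have hfi : ((boxesOf T).filter (fun p => p.1 = i)).card =
      (((boxesOf T).filter (fun p => p.1 = i)).image Prod.snd).card := by
    rw [Finset.card_image_of_injOn]
    rintro ⟨a, b⟩ ha ⟨c, d⟩ hc hbd
    simp at ha hc hbd
    simp [ha.2, hc.2, hbd]
  have hmem : ∀ j, j ∈ ((boxesOf T).filter (fun p => p.1 = i)).image Prod.snd ↔
      1 ≤ j ∧ i ≤ N j := by
    intro j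
    simp only [Finset.mem_image, Finset.mem_filter, Prod.exists]
    constructor
    · rintro ⟨a, b, ⟨hab, rfl⟩, rfl⟩
      have := (h a b).1 hab
      exact this.2
    · intro hj
      exact ⟨i, j, ⟨(h i j).2 ⟨hi, hj.1, hj.2⟩, rfl⟩, rfl⟩
  unfold rowLen
  rw [hfi]
  constructor
  · intro hle
    by_contra hlt
    have hsub : ((boxesOf T).filter (fun p => p.1 = i)).image Prod.snd ⊆
        Finset.Icc 1 (m - 1) := by
      intro j hj
      rw [hmem] at hj
      rw [Finset.mem_Icc]
      refine ⟨hj.1, ?_⟩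
      by_contra hjm
      have := hN.le hm (show m ≤ j by omega)
      omega
    have := Finset.card_le_card hsub
    simp only [Nat.card_Icc] at this
    omega
  · intro hle
    have hsub : Finset.Icc 1 m ⊆
        ((boxesOf T).filter (fun p => p.1 = i)).image Prod.snd := by
      intro j hj
      rw [Finset.mem_Icc] at hj
      rw [hmem]
      exact ⟨hj.1, hle.trans (hN.le hj.1 hj.2)⟩
    have := Finset.card_le_card hsub
    simpa using this

lemma Fills.count_shape {T : List Domino} {N : ℕ → ℕ} (h : Fills T N) (hN : Anti N)
    {m : ℕ} (hm : 1 ≤ m) : (shapeOf T).count m = N m - N (m + 1) := by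
  unfold shapeOf
  rw [h.rows hN, Multiset.count_map]
  have : Multiset.filter (fun a => m = rowLen T a) (Finset.Icc 1 (N 1)).val =
      ((Finset.Icc 1 (N 1)).filter (fun a => m = rowLen T a)).val := rfl
  rw [this, Finset.card_val]
  have : (Finset.Icc 1 (N 1)).filter (fun a => m = rowLen T a) =
      Finset.Ioc (N (m + 1)) (N m) := by
    ext i
    simp only [Finset.mem_filter, Finset.mem_Icc, Finset.mem_Ioc]
    constructor
    · rintro ⟨⟨h1, h2⟩, h3⟩
      have e1 := h.mem_iff_le_rowLen hN h1 hm
      have e2 := h.mem_iff_le_rowLen hN h1 (show 1 ≤ m + 1 by omega)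
      omega
    · rintro ⟨h1, h2⟩
      have e1 := h.mem_iff_le_rowLen hN (show 1 ≤ i by omega) hm
      have e2 := h.mem_iff_le_rowLen hN (show 1 ≤ i by omega) (show 1 ≤ m + 1 by omega)
      have := hN.le le_rfl hm
      omega
  rw [this, Nat.card_Ioc]

lemma Fills.zero_notMem_shape {T : List Domino} {N : ℕ → ℕ} (h : Fills T N) (hN : Anti N) :
    0 ∉ shapeOf T := by
  unfold shapeOf
  rw [h.rows hN, Multiset.mem_map]
  rintro ⟨i, hi, h0⟩
  have hi' : i ∈ Finset.Icc 1 (N 1) := hi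
  rw [Finset.mem_Icc] at hi'
  have := (h.mem_iff_le_rowLen hN hi'.1 le_rfl).2 hi'.2
  omega

lemma mem_parts_iff (T : List Domino) (m : ℕ) : m ∈ partsFinset T ↔ m ∈ shapeOf T := by
  unfold partsFinset shapeOf
  simp

lemma Fills.mem_parts {T : List Domino} {N : ℕ → ℕ} (h : Fills T N) (hN : Anti N)
    {m : ℕ} (hm : 1 ≤ m) : m ∈ partsFinset T ↔ N (m + 1) < N m := by
  rw [mem_parts_iff, ← Multiset.count_pos, h.count_shape hN hm]
  omega

/-- Parity condition on odd parts. -/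
def OddOK (N : ℕ → ℕ) : Prop := ∀ t, Even (N (2 * t + 1) + N (2 * t + 2))

lemma even_sum_of_odd_even (μ : Multiset ℕ) (h : ∀ m, Odd m → Even (μ.count m)) :
    Even μ.sum := by
  rw [Finset.sum_multiset_count]
  refine Finset.even_sum _ (fun m _ => ?_)
  rw [smul_eq_mul]
  rcases Nat.even_or_odd m with hm | hm
  · exact hm.mul_left _
  · exact (h m hm).mul_right _

lemma Fills.typeC {T : List Domino} {N : ℕ → ℕ} (h : Fills T N) (hN : Anti N) (ho : OddOK N) :
    IsTypeCShape (shapeOf T) := by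
  have : ∀ m, Odd m → Even ((shapeOf T).count m) := by
    rintro m ⟨t, rfl⟩
    rw [h.count_shape hN (by omega)]
    have h1 := ho t
    have h2 := hN (2 * t + 1) (by omega)
    rw [Nat.even_sub h2]
    rw [Nat.even_add] at h1
    exact h1
  exact ⟨even_sum_of_odd_even _ this, this⟩

lemma admissible_cons {d : Domino} {T : List Domino} {N : ℕ → ℕ} (hT : IsAdmissibleC T)
    (hd : d.valid) (hdis : Disjoint d.boxes (boxesOf T)) (h : Fills (d :: T) N)
    (hN : Anti N) (ho : OddOK N) : IsAdmissibleC (d :: T) := by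
  refine ⟨standard_cons hT.1 hd hdis (h.young hN), fun k => ?_⟩
  cases k with
  | zero => exact h.typeC hN ho
  | succ k => exact hT.2 k

/-- Adding a vertical domino in column `c`. -/
lemma fills_V {T : List Domino} {N' N : ℕ → ℕ} {c : ℕ} (hc : 1 ≤ c) (h : Fills T N')
    (h1 : N c = N' c + 2) (h2 : ∀ j, j ≠ c → N j = N' j) :
    Fills (Domino.V (N' c + 1) c :: T) N ∧
    Disjoint (Domino.V (N' c + 1) c).boxes (boxesOf T) := by
  constructor
  · intro i j
    rw [boxesOf_cons, Finset.mem_union, h]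
    simp only [Domino.boxes, Finset.mem_insert, Finset.mem_singleton, Prod.mk.injEq]
    by_cases hj : j = c
    · subst hj
      omega
    · rw [h2 j hj]
      omega
  · rw [Finset.disjoint_left]
    rintro ⟨i, j⟩ hp
    rw [h]
    simp only [Domino.boxes, Finset.mem_insert, Finset.mem_singleton, Prod.mk.injEq] at hp
    rcases hp with ⟨rfl, rfl⟩ | ⟨rfl, rfl⟩ <;> omega

/-- Adding a horizontal domino in columns `c`, `c+1`. -/
lemma fills_H {T : List Domino} {N' N : ℕ → ℕ} {c : ℕ} (hc : 1 ≤ c) (h : Fills T N')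
    (h0 : N' (c + 1) = N' c)
    (h1 : N c = N' c + 1) (h1' : N (c + 1) = N' (c + 1) + 1)
    (h2 : ∀ j, j ≠ c → j ≠ c + 1 → N j = N' j) :
    Fills (Domino.H (N' c + 1) c :: T) N ∧
    Disjoint (Domino.H (N' c + 1) c).boxes (boxesOf T) := by
  constructor
  · intro i j
    rw [boxesOf_cons, Finset.mem_union, h]
    simp only [Domino.boxes, Finset.mem_insert, Finset.mem_singleton, Prod.mk.injEq]
    by_cases hj : j = c
    · subst hj
      omega
    · by_cases hj' : j = c + 1
      · subst hj'
        omega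
      · rw [h2 j hj hj']
        omega
  · rw [Finset.disjoint_left]
    rintro ⟨i, j⟩ hp
    rw [h]
    simp only [Domino.boxes, Finset.mem_insert, Finset.mem_singleton, Prod.mk.injEq] at hp
    rcases hp with ⟨rfl, rfl⟩ | ⟨rfl, rfl⟩ <;> omega

/-! ### Clusters -/

/-- The cluster map. -/
def bT (T : List Domino) : ℕ → Finset ℕ := (clusterData T).2

lemma bT_H {i j : ℕ} {T : List Domino} (hj : j % 2 = 1) (h0 : T = [] → j = 1) (m : ℕ) :
    bT (Domino.H i j :: T) m =
      if (bT T m = bT T (j + 1 - 2) ∨ (j + 1 ∈ partsFinset T ∧ bT T m = bT T (j + 1))) ∨ m = j + 1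
      then insert (T.length + 1)
        (if j + 1 ∈ partsFinset T then bT T (j + 1 - 2) ∪ bT T (j + 1) else bT T (j + 1 - 2))
      else bT T m := by
  cases T with
  | nil =>
    obtain rfl := h0 rfl
    simp [bT, clusterData, partsFinset, boxesOf]
  | cons e T =>
    simp only [bT, clusterData, hj, if_true]
    by_cases hp : j + 1 ∈ partsFinset (e :: T)
    · simp [hp]
    · simp [hp]

lemma bT_Vodd {i j : ℕ} {T : List Domino} (hj : j % 2 = 1) (m : ℕ) :
    bT (Domino.V i j :: T) m =
      if bT T m = bT T (j - 1) then insert (T.length + 1) (bT T (j - 1)) else bT T m := by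
  cases T with
  | nil => simp [bT, clusterData]
  | cons e T =>
    have : ¬ (j % 2 = 0) := by omega
    simp only [bT, clusterData, this, if_false]
    rfl

lemma bT_Veven {i j : ℕ} {T : List Domino} (hj : j % 2 = 0) (h0 : T ≠ []) (m : ℕ) :
    bT (Domino.V i j :: T) m =
      if j ∈ partsFinset T then
        (if bT T m = bT T j ∨ m = j then insert (T.length + 1) (bT T j) else bT T m)
      else if m = j then {T.length + 1} else bT T m := by
  cases T with
  | nil => simp at h0
  | cons e T =>
    simp only [bT, clusterData, hj, if_true]
    split_ifs <;> simp_all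

lemma bT_le (T : List Domino) : ∀ m, ∀ y ∈ bT T m, y ≤ T.length := by
  induction T with
  | nil => intro m y hy; simp [bT, clusterData] at hy
  | cons d T ih =>
    intro m y hy
    by_cases hT : T = []
    · subst hT
      simp [bT, clusterData] at hy
      simp [hy]
    have ih' : ∀ m, ∀ y ∈ bT T m, y ≤ T.length + 1 := fun m y h => (ih m y h).trans (by omega)
    rw [List.length_cons]
    cases d with
    | H i j =>
      by_cases hj : j % 2 = 1
      · rw [bT_H hj (fun h => absurd h hT)] at hy
        grind
      · have : bT (Domino.H i j :: T) = bT T := by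
          cases T with
          | nil => simp at hT
          | cons e T => simp [bT, clusterData, hj]
        rw [this] at hy
        exact ih' m y hy
    | V i j =>
      by_cases hj : j % 2 = 1
      · rw [bT_Vodd hj] at hy
        grind
      · rw [bT_Veven (by omega) hT] at hy
        grind

lemma bT_fresh (T : List Domino) (m : ℕ) (s : Finset ℕ) : insert (T.length + 1) s ≠ bT T m := by
  intro h
  have := bT_le T m (T.length + 1) (h ▸ Finset.mem_insert_self _ _)
  omega

/-! ### States and forward steps -/

/-- Membership of `2t` in `B_λ`, in terms of column heights. -/
def InB (N : ℕ → ℕ) (t : ℕ) : Prop := t = 0 ∨ N (2 * t + 1) < N (2 * t)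

/-- `T` is an admissible tableau with column heights `N` and fibre partition given by `κ`. -/
def Realizes (T : List Domino) (N : ℕ → ℕ) (κ : ℕ → Finset ℕ) : Prop :=
  IsAdmissibleC T ∧ Fills T N ∧
    ∀ s t, InB N s → InB N t → (bT T (2 * s) = bT T (2 * t) ↔ κ s = κ t)

lemma step_Vodd {T : List Domino} {N' N : ℕ → ℕ} {κ' κ : ℕ → Finset ℕ} {i : ℕ}
    (hT : Realizes T N' κ') (hN : Anti N) (ho : OddOK N)
    (h1 : N (2 * i + 1) = N' (2 * i + 1) + 2) (h2 : ∀ j, j ≠ 2 * i + 1 → N j = N' j)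
    (hκ : ∀ s, InB N s → κ' s = κ s) : ∃ T, Realizes T N κ := by
  obtain ⟨hA, hF, hb⟩ := hT
  obtain ⟨hF', hdis⟩ := fills_V (by omega) hF h1 h2
  refine ⟨_, admissible_cons hA (by refine ⟨?_, ?_⟩ <;> omega) hdis hF' hN ho, hF', ?_⟩
  have hB : ∀ s, InB N s → InB N' s := by
    intro s hs
    rcases hs with hs | hs
    · exact Or.inl hs
    · right
      have e1 := h2 (2 * s) (by omega)
      by_cases h : s = i
      · subst h; omega
      · have e2 := h2 (2 * s + 1) (by omega)
        omega
  intro s t hs ht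
  rw [bT_Vodd (by omega), bT_Vodd (by omega), ← hκ s hs, ← hκ t ht,
    ← hb s t (hB s hs) (hB t ht)]
  have hf := bT_fresh T
  grind

lemma step_Veven {T : List Domino} {N' N : ℕ → ℕ} {κ : ℕ → Finset ℕ} {i : ℕ}
    (hi : 1 ≤ i)
    (hT : Realizes T N' κ) (hN' : Anti N') (hN : Anti N) (ho : OddOK N)
    (h1 : N (2 * i) = N' (2 * i) + 2) (h2 : ∀ j, j ≠ 2 * i → N j = N' j)
    (hκ : ∀ s, InB N s → s ≠ i → κ s ≠ κ i) : ∃ T, Realizes T N κ := by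
  obtain ⟨hA, hF, hb⟩ := hT
  obtain ⟨hF', hdis⟩ := fills_V (by omega) hF h1 h2
  refine ⟨_, admissible_cons hA (by refine ⟨?_, ?_⟩ <;> omega) hdis hF' hN ho, hF', ?_⟩
  have hne : T ≠ [] := by
    rintro rfl
    have e1 := hN (2 * i - 1) (by omega)
    rw [show 2 * i - 1 + 1 = 2 * i by omega] at e1
    have e2 := h2 (2 * i - 1) (by omega)
    have := (hF 1 (2 * i - 1)).2 ⟨le_rfl, by omega, by omega⟩
    simp [boxesOf] at this
  have hp := hF.mem_parts hN' (m := 2 * i) (by omega)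
  have hB : ∀ s, InB N s → s ≠ i → InB N' s := by
    intro s hs hsi
    rcases hs with hs | hs
    · exact Or.inl hs
    · right
      have e1 := h2 (2 * s) (by omega)
      have e2 := h2 (2 * s + 1) (by omega)
      omega
  have hf := bT_fresh T
  have hf' : ∀ m, {T.length + 1} ≠ bT T m := fun m => by
    simpa using hf m ∅
  intro s t hs ht
  rw [bT_Veven (by omega) hne, bT_Veven (by omega) hne]
  by_cases hpi : 2 * i ∈ partsFinset T
  · have hB2 : InB N' i := Or.inr (hp.1 hpi)
    have hBs : InB N' s := by
      by_cases h : s = i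
      · exact h ▸ hB2
      · exact hB s hs h
    have hBt : InB N' t := by
      by_cases h : t = i
      · exact h ▸ hB2
      · exact hB t ht h
    have k1 := hb s t hBs hBt
    have k2 := hb s i hBs hB2
    have k3 := hb t i hBt hB2
    simp only [hpi, if_true]
    rw [← k1]
    grind
  · simp only [hpi, if_false]
    by_cases hsi : s = i <;> by_cases hti : t = i
    · simp [hsi, hti]
    · have := hκ t ht hti
      grind
    · have := hκ s hs hsi
      grind
    · have k1 := hb s t (hB s hs hsi) (hB t ht hti)
      rw [← k1]
      grind

lemma step_H {T : List Domino} {N' N : ℕ → ℕ} {κ' κ : ℕ → Finset ℕ} {i : ℕ}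
    (hT : Realizes T N' κ') (hN' : Anti N') (hN : Anti N) (ho : OddOK N)
    (h0 : N' (2 * i + 2) = N' (2 * i + 1))
    (h1 : N (2 * i + 1) = N' (2 * i + 1) + 1) (h1' : N (2 * i + 2) = N' (2 * i + 2) + 1)
    (h2 : ∀ j, j ≠ 2 * i + 1 → j ≠ 2 * i + 2 → N j = N' j)
    (hκ : ∀ s, InB N s → κ' s = κ s) (hκi : κ' i = κ (i + 1))
    (hiB : InB N (i + 1)) : ∃ T, Realizes T N κ := by
  obtain ⟨hA, hF, hb⟩ := hT
  obtain ⟨hF', hdis⟩ := fills_H (c := 2 * i + 1) (by omega) hF h0 h1 h1' h2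
  refine ⟨_, admissible_cons hA (by refine ⟨?_, ?_⟩ <;> omega) hdis hF' hN ho, hF', ?_⟩
  have hp := hF.mem_parts hN' (m := 2 * i + 1 + 1) (by omega)
  have hnil : T = [] → 2 * i + 1 = 1 := by
    rintro rfl
    by_contra hne
    have e1 := hN (2 * i) (by omega)
    have e2 := h2 (2 * i) (by omega) (by omega)
    have := (hF 1 (2 * i)).2 ⟨le_rfl, by omega, by omega⟩
    simp [boxesOf] at this
  have hBi : InB N' i := by
    by_cases h : i = 0
    · exact Or.inl h
    · right
      have e1 := hN (2 * i) (by omega)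
      have e2 := h2 (2 * i) (by omega) (by omega)
      omega
  have hB : ∀ s, InB N s → s ≠ i + 1 → InB N' s := by
    intro s hs hsi
    by_cases h : s = i
    · exact h ▸ hBi
    rcases hs with hs | hs
    · exact Or.inl hs
    · right
      have e1 := h2 (2 * s) (by omega) (by omega)
      have e2 := h2 (2 * s + 1) (by omega) (by omega)
      omega
  have hf := bT_fresh T
  have hk1 := hκ _ hiB
  -- merged iff same colour as `i + 1`
  have key : ∀ s, InB N s →
      (((bT T (2 * s) = bT T (2 * i + 1 + 1 - 2) ∨ (2 * i + 1 + 1 ∈ partsFinset T ∧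
        bT T (2 * s) = bT T (2 * i + 1 + 1))) ∨ 2 * s = 2 * i + 1 + 1) ↔ κ s = κ (i + 1)) := by
    intro s hs
    by_cases hsi : s = i + 1
    · subst hsi
      simp; right; omega
    · have hBs := hB s hs hsi
      have k1 := hb s i hBs hBi
      have k3 := hκ s hs
      rw [show 2 * i + 1 + 1 - 2 = 2 * i by omega]
      have k4 : ¬ (2 * s = 2 * i + 1 + 1) := by omega
      by_cases hpi : 2 * i + 1 + 1 ∈ partsFinset T
      · have hB2 : InB N' (i + 1) := by
          right
          exact hp.1 hpi
        have k2 := hb s (i + 1) hBs hB2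
        rw [show 2 * (i + 1) = 2 * i + 1 + 1 by ring] at k2
        rw [k1, k2, k3, hκi, hk1]
        tauto
      · rw [k1, k3, hκi]
        tauto
  intro s t hs ht
  rw [bT_H (by omega) hnil, bT_H (by omega) hnil]
  simp only [key s hs, key t ht]
  by_cases hcs : κ s = κ (i + 1) <;> by_cases hct : κ t = κ (i + 1)
  · simp [hcs, hct]
  · simp only [hcs, hct, if_true, if_false]
    exact ⟨fun h => absurd h (hf _ _), fun h => absurd h.symm hct⟩
  · simp only [hcs, hct, if_true, if_false]
    exact ⟨fun h => absurd h.symm (hf _ _), fun h => h.elim⟩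
  · simp only [hcs, hct, if_false]
    have hsi : s ≠ i + 1 := fun h => hcs (h ▸ rfl)
    have hti : t ≠ i + 1 := fun h => hct (h ▸ rfl)
    rw [hb s t (hB s hs hsi) (hB t ht hti), hκ s hs, hκ t ht]

/-! ### The induction -/

/-- An even noncrossing colouring of a type C diagram. -/
structure St (M : ℕ) (N : ℕ → ℕ) (κ : ℕ → Finset ℕ) : Prop where
  anti : Anti N
  zero : ∀ j, M < j → N j = 0
  odd : OddOK N
  nc : ∀ a b c d, InB N a → InB N b → InB N c → InB N d → a < b → b < c → c < d →
    κ a = κ c → κ b = κ d → κ a = κ b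
  ev : ∀ m, InB N m → κ m ≠ κ 0 →
    ∑ t ∈ Finset.Icc 1 M, (if κ t = κ m then ((N (2 * t) + N (2 * t + 1) : ℕ) : ZMod 2) else 0) = 0

lemma cast_zero_of_not_inB {N : ℕ → ℕ} (hN : Anti N) {t : ℕ} (ht : ¬ InB N t) :
    ((N (2 * t) + N (2 * t + 1) : ℕ) : ZMod 2) = 0 := by
  unfold InB at ht
  push Not at ht
  have := hN (2 * t) (by omega)
  have h : N (2 * t + 1) = N (2 * t) := by omega
  rw [h, ZMod.natCast_eq_zero_iff]
  omega

lemma inB_le {M : ℕ} {N : ℕ → ℕ} {κ : ℕ → Finset ℕ} (h : St M N κ) {t : ℕ} (ht : InB N t) :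
    t ≤ M := by
  by_contra hlt
  rcases ht with ht | ht
  · omega
  · have := h.zero (2 * t) (by omega)
    omega

/-- Changing by an even amount does not change parities. -/
lemma cast_congr {a b : ℕ} (h : a % 2 = b % 2) : (a : ZMod 2) = (b : ZMod 2) :=
  (ZMod.natCast_eq_natCast_iff a b 2).2 h

/-- Removing a vertical domino from an odd column. -/
lemma St.removeOdd {M : ℕ} {N : ℕ → ℕ} {κ : ℕ → Finset ℕ} (h : St M N κ) {i : ℕ}
    (hi : N (2 * i + 2) < N (2 * i + 1)) :
    ∃ N' κ', St M N' κ' ∧ N (2 * i + 1) = N' (2 * i + 1) + 2 ∧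
      (∀ j, j ≠ 2 * i + 1 → N j = N' j) ∧ (∀ s, InB N s → κ' s = κ s) := by
  have h2 : N (2 * i + 2) + 2 ≤ N (2 * i + 1) := by
    have := h.odd i
    rw [Nat.even_iff] at this
    omega
  obtain ⟨N', hN'⟩ : ∃ N' : ℕ → ℕ, N' = Function.update N (2 * i + 1) (N (2 * i + 1) - 2) :=
    ⟨_, rfl⟩
  have e1 : N (2 * i + 1) = N' (2 * i + 1) + 2 := by rw [hN']; simp; omega
  have e2 : ∀ j, j ≠ 2 * i + 1 → N j = N' j := by intro j hj; rw [hN']; simp [hj]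
  have hB : ∀ s, s ≠ i → (InB N' s ↔ InB N s) := by
    intro s hs
    unfold InB
    rw [e2 (2 * s) (by omega), e2 (2 * s + 1) (by omega)]
  obtain ⟨f, hf⟩ := Infinite.exists_notMem_finset ((Finset.range (M + 1)).image κ)
  have hfr : ∀ s, InB N s → κ s ≠ f := by
    intro s hs hsf
    apply hf
    rw [Finset.mem_image]
    exact ⟨s, Finset.mem_range.2 (by have := inB_le h hs; omega), hsf⟩
  have hanti : Anti N' := by
    intro j hj
    have a1 := h.anti j hj
    by_cases hj1 : j = 2 * i + 1
    · have := e2 (j + 1) (by omega)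
      subst hj1
      have : N (2 * i + 1 + 1) + 2 ≤ N (2 * i + 1) := h2
      omega
    · have b1 := e2 j hj1
      by_cases hj2 : j + 1 = 2 * i + 1
      · rw [hj2] at a1 ⊢; omega
      · have := e2 (j + 1) hj2
        omega
  have hzero : ∀ j, M < j → N' j = 0 := by
    intro j hj
    have := h.zero j hj
    by_cases hj1 : j = 2 * i + 1
    · subst hj1; omega
    · rw [← e2 j hj1, this]
  have hodd : OddOK N' := by
    intro t
    have := h.odd t
    rw [Nat.even_iff] at this ⊢
    have b1 := e2 (2 * t + 2) (by omega)
    by_cases ht : t = i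
    · subst ht; omega
    · have b2 := e2 (2 * t + 1) (by omega)
      omega
  have hw : ∀ t, ((N' (2 * t) + N' (2 * t + 1) : ℕ) : ZMod 2) =
      ((N (2 * t) + N (2 * t + 1) : ℕ) : ZMod 2) := by
    intro t
    apply cast_congr
    have b1 := e2 (2 * t) (by omega)
    by_cases ht : t = i
    · subst ht; omega
    · have b2 := e2 (2 * t + 1) (by omega)
      omega
  by_cases hiB : InB N i
  · have hB' : ∀ s, InB N' s → InB N s := by
      intro s hs
      by_cases hsi : s = i
      · exact hsi ▸ hiB
      · exact (hB s hsi).1 hs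
    refine ⟨N', κ, ⟨hanti, hzero, hodd, ?_, ?_⟩, e1, e2, fun s _ => rfl⟩
    · intro a b c d ha hb hc hd
      exact h.nc a b c d (hB' a ha) (hB' b hb) (hB' c hc) (hB' d hd)
    · intro m hm hm0
      simp only [hw]
      exact h.ev m (hB' m hm) hm0
  · have hi0 : i ≠ 0 := fun h0 => hiB (Or.inl h0)
    have hB' : ∀ s, InB N' s → s ≠ i → InB N s := fun s hs hsi => (hB s hsi).1 hs
    have hu : ∀ s, s ≠ i → Function.update κ i f s = κ s := fun s hs => by simp [hs]
    have hui : Function.update κ i f i = f := by simp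
    refine ⟨N', Function.update κ i f, ⟨hanti, hzero, hodd, ?_, ?_⟩, e1, e2, ?_⟩
    · generalize Function.update κ i f = κ' at hu hui
      intro a b c d ha hb hc hd hab hbc hcd hac hbd
      by_cases a1 : a = i
      · exfalso
        have := hfr c (hB' c hc (by omega))
        rw [a1, hui, hu c (by omega)] at hac
        exact this hac.symm
      by_cases b1 : b = i
      · exfalso
        have := hfr d (hB' d hd (by omega))
        rw [b1, hui, hu d (by omega)] at hbd
        exact this hbd.symm
      by_cases c1 : c = i
      · exfalso
        have := hfr a (hB' a ha (by omega))
        rw [c1, hui, hu a (by omega)] at hac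
        exact this hac
      by_cases d1 : d = i
      · exfalso
        have := hfr b (hB' b hb (by omega))
        rw [d1, hui, hu b (by omega)] at hbd
        exact this hbd
      rw [hu a a1, hu c c1] at hac
      rw [hu b b1, hu d d1] at hbd
      rw [hu a a1, hu b b1]
      exact h.nc a b c d (hB' a ha a1) (hB' b hb b1) (hB' c hc c1) (hB' d hd d1) hab hbc hcd
        hac hbd
    · generalize Function.update κ i f = κ' at hu hui
      intro m hm hm0
      simp only [hw]
      by_cases hmi : m = i
      · apply Finset.sum_eq_zero
        intro t _
        by_cases hti : t = i
        · rw [hti, cast_zero_of_not_inB h.anti hiB]; simp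
        · by_cases htB : InB N t
          · rw [if_neg]
            rw [hmi, hui, hu t hti]
            exact hfr t htB
          · rw [cast_zero_of_not_inB h.anti htB]; simp
      · rw [hu m hmi, hu 0 (Ne.symm hi0)] at hm0
        refine Eq.trans ?_ (h.ev m (hB' m hm hmi) hm0)
        apply Finset.sum_congr rfl
        intro t _
        by_cases hti : t = i
        · rw [hti, cast_zero_of_not_inB h.anti hiB]; simp
        · rw [hu t hti, hu m hmi]
    · intro s hs
      exact hu s (fun hsi => hiB (hsi ▸ hs))

/-- Removing a horizontal domino. -/
lemma St.removeH {M : ℕ} {N : ℕ → ℕ} {κ : ℕ → Finset ℕ} (h : St M N κ) {i : ℕ}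
    (hno : ∀ t, N (2 * t + 2) = N (2 * t + 1))
    (hi : InB N (i + 1)) (hi' : InB N i → κ i = κ (i + 1)) :
    ∃ N' κ', St M N' κ' ∧ N' (2 * i + 2) = N' (2 * i + 1) ∧
      N (2 * i + 1) = N' (2 * i + 1) + 1 ∧ N (2 * i + 2) = N' (2 * i + 2) + 1 ∧
      (∀ j, j ≠ 2 * i + 1 → j ≠ 2 * i + 2 → N j = N' j) ∧
      (∀ s, InB N s → κ' s = κ s) ∧ κ' i = κ (i + 1) := by
  have hlt : N (2 * i + 3) < N (2 * i + 2) := by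
    rcases hi with hi | hi
    · omega
    · exact hi
  have hnoi := hno i
  obtain ⟨N', hN'⟩ : ∃ N' : ℕ → ℕ, N' = fun j =>
    if j = 2 * i + 1 ∨ j = 2 * i + 2 then N j - 1 else N j := ⟨_, rfl⟩
  have e1 : N (2 * i + 1) = N' (2 * i + 1) + 1 := by rw [hN']; simp; omega
  have e1' : N (2 * i + 2) = N' (2 * i + 2) + 1 := by rw [hN']; simp; omega
  have e2 : ∀ j, j ≠ 2 * i + 1 → j ≠ 2 * i + 2 → N j = N' j := by
    intro j hj hj'; rw [hN']; simp [hj, hj']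
  have hu : ∀ s, s ≠ i → Function.update κ i (κ (i + 1)) s = κ s := fun s hs => by simp [hs]
  have hui : Function.update κ i (κ (i + 1)) i = κ (i + 1) := by simp
  have huB : ∀ s, InB N s → Function.update κ i (κ (i + 1)) s = κ s := by
    intro s hs
    by_cases hsi : s = i
    · subst hsi
      rw [hui, hi' hs]
    · exact hu s hsi
  have hB : ∀ s, s ≠ i → InB N' s → InB N s := by
    intro s hs hsB
    by_cases hs1 : s = i + 1
    · exact hs1 ▸ hi
    · unfold InB at hsB ⊢
      rw [e2 (2 * s) (by omega) (by omega), e2 (2 * s + 1) (by omega) (by omega)]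
      exact hsB
  refine ⟨N', Function.update κ i (κ (i + 1)), ⟨?_, ?_, ?_, ?_, ?_⟩, by omega, e1, e1', e2, huB, hui⟩
  · intro j hj
    have a1 := h.anti j hj
    by_cases hj1 : j = 2 * i + 1
    · subst hj1
      show N' (2 * i + 2) ≤ N' (2 * i + 1)
      omega
    by_cases hj2 : j = 2 * i + 2
    · subst hj2
      have := e2 (2 * i + 3) (by omega) (by omega)
      show N' (2 * i + 3) ≤ N' (2 * i + 2)
      omega
    have b1 := e2 j hj1 hj2
    by_cases hj3 : j + 1 = 2 * i + 1
    · rw [hj3] at a1 ⊢; omega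
    · have := e2 (j + 1) hj3 (by omega)
      omega
  · intro j hj
    have := h.zero j hj
    by_cases hj1 : j = 2 * i + 1
    · subst hj1; omega
    by_cases hj2 : j = 2 * i + 2
    · subst hj2; omega
    · rw [← e2 j hj1 hj2, this]
  · intro t
    have := h.odd t
    rw [Nat.even_iff] at this ⊢
    by_cases ht : t = i
    · subst ht; omega
    · have b1 := e2 (2 * t + 2) (by omega) (by omega)
      have b2 := e2 (2 * t + 1) (by omega) (by omega)
      omega
  · generalize Function.update κ i (κ (i + 1)) = κ' at hu hui huB
    intro a b c d ha hb hc hd hab hbc hcd hac hbd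
    by_cases hiB : InB N i
    · have hB' : ∀ s, InB N' s → InB N s := by
        intro s hs
        by_cases hsi : s = i
        · exact hsi ▸ hiB
        · exact hB s hsi hs
      rw [huB a (hB' a ha), huB c (hB' c hc)] at hac
      rw [huB b (hB' b hb), huB d (hB' d hd)] at hbd
      rw [huB a (hB' a ha), huB b (hB' b hb)]
      exact h.nc a b c d (hB' a ha) (hB' b hb) (hB' c hc) (hB' d hd) hab hbc hcd hac hbd
    · -- replace `i` by `i + 1`
      have hii : κ' i = κ' (i + 1) := by rw [hui, hu (i + 1) (by omega)]
      obtain ⟨g, hg⟩ : ∃ g : ℕ → ℕ, g = fun s => if s = i then i + 1 else s := ⟨_, rfl⟩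
      have hgB : ∀ s, InB N' s → InB N (g s) ∧ κ' s = κ (g s) := by
        intro s hs
        by_cases hsi : s = i
        · subst hsi
          simp [hg, hi, hui]
        · simp only [hg, hsi, if_false]
          exact ⟨hB s hsi hs, hu s hsi⟩
      by_cases hab' : g a < g b
      · by_cases hbc' : g b < g c
        · by_cases hcd' : g c < g d
          · have := h.nc (g a) (g b) (g c) (g d) (hgB a ha).1 (hgB b hb).1 (hgB c hc).1
              (hgB d hd).1 hab' hbc' hcd'
            rw [(hgB a ha).2, (hgB c hc).2] at hac
            rw [(hgB b hb).2, (hgB d hd).2] at hbd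
            rw [(hgB a ha).2, (hgB b hb).2]
            exact this hac hbd
          · have hcd2 : g c = g d := by
              simp only [hg] at hcd' ⊢; split_ifs at hcd' ⊢ <;> omega
            rw [hbd, hac, (hgB c hc).2, (hgB d hd).2, hcd2]
        · have hbc2 : g b = g c := by
            simp only [hg] at hbc' ⊢; split_ifs at hbc' ⊢ <;> omega
          rw [hac, (hgB c hc).2, (hgB b hb).2, hbc2]
      · have hab2 : g a = g b := by
          simp only [hg] at hab' ⊢; split_ifs at hab' ⊢ <;> omega
        rw [(hgB a ha).2, (hgB b hb).2, hab2]
  · generalize Function.update κ i (κ (i + 1)) = κ' at hu hui huB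
    have hu0 : κ' 0 = κ 0 := huB 0 (Or.inl rfl)
    have key : ∀ col, col ≠ κ 0 →
        ∑ t ∈ Finset.Icc 1 M, (if κ' t = col then ((N' (2 * t) + N' (2 * t + 1) : ℕ) : ZMod 2)
          else 0) =
        ∑ t ∈ Finset.Icc 1 M, (if κ t = col then ((N (2 * t) + N (2 * t + 1) : ℕ) : ZMod 2)
          else 0) := by
      intro col hcol
      have hM : i + 1 ≤ M := inB_le h hi
      have hdiff : ∀ t, (if κ' t = col then ((N' (2 * t) + N' (2 * t + 1) : ℕ) : ZMod 2) else 0) =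
          (if κ t = col then ((N (2 * t) + N (2 * t + 1) : ℕ) : ZMod 2) else 0) +
          ((if t = i then (if κ (i + 1) = col then (1 : ZMod 2) else 0) else 0) +
           (if t = i + 1 then (if κ (i + 1) = col then (1 : ZMod 2) else 0) else 0)) := by
        intro t
        by_cases ht : t = i
        · subst ht
          have b1 := e2 (2 * t) (by omega) (by omega)
          have b3 : ((N' (2 * t) + N' (2 * t + 1) : ℕ) : ZMod 2) =
              ((N (2 * t) + N (2 * t + 1) : ℕ) : ZMod 2) + 1 := by
            have : ((N (2 * t) + N (2 * t + 1) : ℕ) : ZMod 2) + 1 =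
              ((N (2 * t) + N (2 * t + 1) + 1 : ℕ) : ZMod 2) := by push_cast; ring
            rw [this]
            apply cast_congr
            omega
          rw [b3, hui]
          by_cases htB : InB N t
          · rw [hi' htB]
            by_cases hc : κ (t + 1) = col <;> simp [hc]
          · rw [cast_zero_of_not_inB h.anti htB]
            by_cases hc : κ (t + 1) = col <;> simp [hc]
        · rw [hu t ht]
          by_cases ht1 : t = i + 1
          · subst ht1
            have b1 := e2 (2 * (i + 1) + 1) (by omega) (by omega)
            have b4 : N (2 * (i + 1)) = N' (2 * (i + 1)) + 1 := e1'
            have b3 : ((N' (2 * (i + 1)) + N' (2 * (i + 1) + 1) : ℕ) : ZMod 2) =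
                ((N (2 * (i + 1)) + N (2 * (i + 1) + 1) : ℕ) : ZMod 2) + 1 := by
              have : ((N (2 * (i + 1)) + N (2 * (i + 1) + 1) : ℕ) : ZMod 2) + 1 =
                ((N (2 * (i + 1)) + N (2 * (i + 1) + 1) + 1 : ℕ) : ZMod 2) := by push_cast; ring
              rw [this]
              apply cast_congr
              omega
            rw [b3]
            by_cases hc : κ (i + 1) = col <;> simp [hc]
          · have b1 := e2 (2 * t) (by omega) (by omega)
            have b2 := e2 (2 * t + 1) (by omega) (by omega)
            rw [← b1, ← b2]
            simp [ht, ht1]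
      simp only [hdiff]
      rw [Finset.sum_add_distrib, Finset.sum_add_distrib, Finset.sum_ite_eq', Finset.sum_ite_eq',
        if_pos (Finset.mem_Icc.2 ⟨show 1 ≤ i + 1 by omega, hM⟩)]
      by_cases hi0 : i = 0
      · have : κ (i + 1) ≠ col := by
          rw [← hi' (Or.inl hi0), hi0]
          exact hcol.symm
        simp [this]
      · rw [if_pos (Finset.mem_Icc.2 ⟨show 1 ≤ i by omega, by omega⟩)]
        rw [CharTwo.add_self_eq_zero, add_zero]
    intro m hm hm0
    by_cases hmi : m = i
    · rw [hmi, hui, hu0] at hm0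
      rw [hmi, hui, key _ hm0]
      exact h.ev (i + 1) hi hm0
    · rw [hu m hmi, hu0] at hm0
      rw [hu m hmi, key _ hm0]
      exact h.ev m (hB m hmi hm) hm0

/-- Removing a vertical domino from an even column. -/
lemma St.removeEven {M : ℕ} {N : ℕ → ℕ} {κ : ℕ → Finset ℕ} (h : St M N κ) {i : ℕ} (hi1 : 1 ≤ i)
    (hno : ∀ t, N (2 * t + 2) = N (2 * t + 1))
    (hi : InB N i) (hs : ∀ s, InB N s → s ≠ i → κ s ≠ κ i) :
    ∃ N', St M N' κ ∧ N (2 * i) = N' (2 * i) + 2 ∧ (∀ j, j ≠ 2 * i → N j = N' j) := by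
  have hlt : N (2 * i + 1) < N (2 * i) := by
    rcases hi with hi | hi
    · omega
    · exact hi
  have hpar : (N (2 * i) + N (2 * i + 1)) % 2 = 0 := by
    have := h.ev i hi (fun h0 => hs 0 (Or.inl rfl) (by omega) h0.symm)
    rw [Finset.sum_eq_single i] at this
    · simp only [if_true] at this
      rw [ZMod.natCast_eq_zero_iff] at this
      omega
    · intro t _ hti
      by_cases htB : InB N t
      · rw [if_neg (hs t htB hti)]
      · rw [cast_zero_of_not_inB h.anti htB]; simp
    · intro hni
      exact absurd (Finset.mem_Icc.2 ⟨hi1, inB_le h hi⟩) hni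
  obtain ⟨N', hN'⟩ : ∃ N' : ℕ → ℕ, N' = Function.update N (2 * i) (N (2 * i) - 2) :=
    ⟨_, rfl⟩
  have e1 : N (2 * i) = N' (2 * i) + 2 := by rw [hN']; simp; omega
  have e2 : ∀ j, j ≠ 2 * i → N j = N' j := by intro j hj; rw [hN']; simp [hj]
  have hB : ∀ s, InB N' s → InB N s := by
    intro s hs
    by_cases hsi : s = i
    · exact hsi ▸ hi
    · unfold InB at hs ⊢
      rw [e2 (2 * s) (by omega), e2 (2 * s + 1) (by omega)]
      exact hs
  refine ⟨N', ⟨?_, ?_, ?_, ?_, ?_⟩, e1, e2⟩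
  · intro j hj
    have a1 := h.anti j hj
    by_cases hj1 : j = 2 * i
    · have := e2 (j + 1) (by omega)
      subst hj1
      omega
    · have b1 := e2 j hj1
      by_cases hj2 : j + 1 = 2 * i
      · rw [hj2] at a1 ⊢; omega
      · have := e2 (j + 1) hj2
        omega
  · intro j hj
    have := h.zero j hj
    by_cases hj1 : j = 2 * i
    · subst hj1; omega
    · rw [← e2 j hj1, this]
  · intro t
    have := h.odd t
    rw [Nat.even_iff] at this ⊢
    have b1 := e2 (2 * t + 1) (by omega)
    by_cases ht : 2 * t + 2 = 2 * i
    · rw [ht] at this ⊢; omega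
    · have b2 := e2 (2 * t + 2) ht
      omega
  · intro a b c d ha hb hc hd
    exact h.nc a b c d (hB a ha) (hB b hb) (hB c hc) (hB d hd)
  · intro m hm hm0
    refine Eq.trans ?_ (h.ev m (hB m hm) hm0)
    apply Finset.sum_congr rfl
    intro t _
    congr 1
    apply cast_congr
    have b1 := e2 (2 * t + 1) (by omega)
    by_cases ht : t = i
    · subst ht; omega
    · have b2 := e2 (2 * t) (by omega)
      omega

/-- If no horizontal domino can be removed, some block is a singleton. -/
lemma St.exists_singleton {M : ℕ} {N : ℕ → ℕ} {κ : ℕ → Finset ℕ} (h : St M N κ)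
    (hB : ∀ i, InB N (i + 1) → InB N i ∧ κ i ≠ κ (i + 1)) {i₀ : ℕ} (hi₀ : 1 ≤ i₀)
    (hi₀B : InB N i₀) :
    ∃ i, 1 ≤ i ∧ InB N i ∧ ∀ s, InB N s → s ≠ i → κ s ≠ κ i := by
  by_cases hex : ∃ n a, InB N a ∧ InB N (a + n + 1) ∧ κ a = κ (a + n + 1)
  · classical
    obtain ⟨a, ha, hb, hab⟩ := Nat.find_spec hex
    have hmin := fun m (hm : m < Nat.find hex) => Nat.find_min hex hm
    generalize Nat.find hex = n at hb hab hmin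
    have hdown : ∀ k t, InB N (t + k) → InB N t := by
      intro k
      induction k with
      | zero => intro t ht; exact ht
      | succ k ih => intro t ht; exact ih t (hB (t + k) ht).1
    have ha1 : InB N (a + 1) := hdown n (a + 1) (by rwa [show a + 1 + n = a + n + 1 by ring])
    have hadj := (hB a ha1).2
    have hn : 1 ≤ n := by
      rcases Nat.eq_zero_or_pos n with h0 | h0
      · subst h0; exact absurd hab hadj
      · exact h0
    refine ⟨a + 1, by omega, ha1, fun s hs hsa hκ => ?_⟩
    rcases lt_trichotomy s a with hlt | heq | hgt
    · have := h.nc s a (a + 1) (a + n + 1) hs ha ha1 hb hlt (by omega) (by omega) hκ hab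
      exact hadj (this.symm.trans hκ)
    · subst heq; exact hadj hκ
    · rcases lt_trichotomy s (a + n + 1) with hlt2 | heq2 | hgt2
      · apply hmin (s - a - 2) (by omega)
        refine ⟨a + 1, ha1, ?_, ?_⟩
        · rwa [show a + 1 + (s - a - 2) + 1 = s by omega]
        · rw [show a + 1 + (s - a - 2) + 1 = s by omega]
          exact hκ.symm
      · subst heq2; exact hadj (hab.trans hκ)
      · exact hadj (h.nc a (a + 1) (a + n + 1) s ha ha1 hb hs (by omega) (by omega) hgt2 hab
          hκ.symm)
  · push Not at hex
    refine ⟨i₀, hi₀, hi₀B, fun s hs hne hκ => ?_⟩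
    rcases lt_or_gt_of_ne hne with hlt | hlt
    · apply hex (i₀ - s - 1) s hs
      · rwa [show s + (i₀ - s - 1) + 1 = i₀ by omega]
      · rwa [show s + (i₀ - s - 1) + 1 = i₀ by omega]
    · apply hex (s - i₀ - 1) i₀ hi₀B
      · rwa [show i₀ + (s - i₀ - 1) + 1 = s by omega]
      · rw [show i₀ + (s - i₀ - 1) + 1 = s by omega]
        exact hκ.symm

lemma sum_lt {M : ℕ} {N N' : ℕ → ℕ} (hle : ∀ j, N' j ≤ N j) {c : ℕ} (hc : 1 ≤ c)
    (hcM : c ≤ M) (hlt : N' c < N c) :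
    ∑ j ∈ Finset.Icc 1 M, N' j < ∑ j ∈ Finset.Icc 1 M, N j :=
  Finset.sum_lt_sum (fun j _ => hle j) ⟨c, Finset.mem_Icc.2 ⟨hc, hcM⟩, hlt⟩

theorem realize (M : ℕ) : ∀ n N κ, St M N κ → ∑ j ∈ Finset.Icc 1 M, N j = n →
    ∃ T, Realizes T N κ := by
  intro n
  induction n using Nat.strong_induction_on with
  | _ n ih =>
  intro N κ h hn
  have hcM : ∀ c, 0 < N c → c ≤ M := by
    intro c hc
    by_contra hlt
    have := h.zero c (by omega)
    omega
  by_cases hodd : ∃ i, N (2 * i + 2) < N (2 * i + 1)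
  · obtain ⟨i, hi⟩ := hodd
    obtain ⟨N', κ', h', e1, e2, hκ⟩ := h.removeOdd hi
    have hlt : ∑ j ∈ Finset.Icc 1 M, N' j < n := by
      rw [← hn]
      refine sum_lt (fun j => ?_) (c := 2 * i + 1) (by omega) (hcM _ (by omega)) (by omega)
      by_cases hj : j = 2 * i + 1
      · subst hj; omega
      · exact (e2 j hj).ge
    obtain ⟨T, hT⟩ := ih _ hlt N' κ' h' rfl
    exact step_Vodd hT h.anti h.odd e1 e2 hκ
  have hno : ∀ t, N (2 * t + 2) = N (2 * t + 1) := by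
    intro t
    push Not at hodd
    exact le_antisymm (h.anti (2 * t + 1) (by omega)) (hodd t)
  by_cases hH : ∃ i, InB N (i + 1) ∧ (InB N i → κ i = κ (i + 1))
  · obtain ⟨i, hi, hi'⟩ := hH
    obtain ⟨N', κ', h', e0, e1, e1', e2, hκ, hκi⟩ := h.removeH hno hi hi'
    have hlt : ∑ j ∈ Finset.Icc 1 M, N' j < n := by
      rw [← hn]
      refine sum_lt (fun j => ?_) (c := 2 * i + 1) (by omega) (hcM _ (by omega)) (by omega)
      by_cases hj : j = 2 * i + 1
      · subst hj; omega
      · by_cases hj' : j = 2 * i + 2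
        · subst hj'; omega
        · exact (e2 j hj hj').ge
    obtain ⟨T, hT⟩ := ih _ hlt N' κ' h' rfl
    exact step_H hT h'.anti h.anti h.odd e0 e1 e1' e2 hκ hκi hi
  push Not at hH
  by_cases hz : ∃ i, 1 ≤ i ∧ InB N i
  · obtain ⟨i₀, hi₀, hi₀B⟩ := hz
    obtain ⟨i, hi1, hi, hs⟩ := h.exists_singleton hH hi₀ hi₀B
    obtain ⟨N', h', e1, e2⟩ := h.removeEven hi1 hno hi hs
    have hlt : ∑ j ∈ Finset.Icc 1 M, N' j < n := by
      rw [← hn]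
      refine sum_lt (fun j => ?_) (c := 2 * i) (by omega) (hcM _ (by omega)) (by omega)
      by_cases hj : j = 2 * i
      · subst hj; omega
      · exact (e2 j hj).ge
    obtain ⟨T, hT⟩ := ih _ hlt N' κ h' rfl
    exact step_Veven hi1 hT h'.anti h.anti h.odd e1 e2 hs
  · -- the empty diagram
    push Not at hz
    have hconst : ∀ j, 1 ≤ j → N j ≤ N (j + 1) := by
      intro j hj
      rcases Nat.even_or_odd' j with ⟨t, rfl | rfl⟩
      · have := hz t (by omega)
        unfold InB at this
        push Not at this
        exact this.2
      · exact (hno t).ge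
    have hzero : ∀ j, 1 ≤ j → N j = 0 := by
      intro j hj
      have hle : ∀ k, N j ≤ N (j + k) := by
        intro k
        induction k with
        | zero => exact le_rfl
        | succ k ihk => exact ihk.trans (hconst (j + k) (by omega))
      have h1 := hle (M + 1)
      have h2 := h.zero (j + (M + 1)) (by omega)
      omega
    have hF : Fills [] N := by
      intro i j
      simp only [boxesOf, List.foldr_nil, Finset.notMem_empty, false_iff]
      rintro ⟨h1, h2, h3⟩
      have := hzero j h2
      omega
    refine ⟨[], ⟨⟨by simp, by simp, hF.young h.anti, ?_, ?_⟩, ?_⟩, hF, ?_⟩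
    · intro i j hij; simp [boxesOf] at hij
    · intro i j hij; simp [boxesOf] at hij
    · intro k
      rw [List.drop_nil]
      exact hF.typeC h.anti h.odd
    · intro s t hs ht
      have hs0 : s = 0 := by
        by_contra hne
        exact hz s (by omega) hs
      have ht0 : t = 0 := by
        by_contra hne
        exact hz t (by omega) ht
      simp [hs0, ht0]

/-! ### Column heights of a partition -/

/-- Column heights of the diagram of `lam`. -/
def colH (lam : Multiset ℕ) (j : ℕ) : ℕ := lam.countP (fun m => j ≤ m)

lemma colH_eq (lam : Multiset ℕ) (j : ℕ) : colH lam j = colH lam (j + 1) + lam.count j := by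
  unfold colH
  induction lam using Multiset.induction with
  | empty => simp
  | cons a s ih =>
    rw [Multiset.countP_cons, Multiset.countP_cons, Multiset.count_cons, ih]
    split_ifs <;> omega

/-- The surjectivity direction of Theorem 2.6 (proved in Section 3 of the paper): for
every partition `λ` of type C with distinct even parts `2x₁ > … > 2x_ℓ` of
multiplicities `r₁, …, r_ℓ`, and every even NCP `𝓛` of `B_λ = {0, 2x₁, …, 2x_ℓ}`,
there is an admissible domino tableau `T` of type C and shape `λ` whose partition of
`B_λ` into fibers of `b_T` over the open clusters is exactly `𝓛`. -/
theorem stmt2 (ℓ : ℕ) (x r : ℕ → ℕ)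
    (hx : ∀ i ∈ Finset.Icc 1 ℓ, ∀ j ∈ Finset.Icc 1 ℓ, i < j → x j < x i)
    (hxpos : ∀ i ∈ Finset.Icc 1 ℓ, 0 < x i)
    (hr : ∀ i ∈ Finset.Icc 1 ℓ, 0 < r i)
    (lam : Multiset ℕ) (hpos : ∀ m ∈ lam, 0 < m)
    (hC : IsTypeCShape lam)
    (hcount : ∀ i ∈ Finset.Icc 1 ℓ, lam.count (2 * x i) = r i)
    (honly : ∀ m ∈ lam, Even m → ∃ i ∈ Finset.Icc 1 ℓ, m = 2 * x i)
    (P : Finset (Finset ℕ)) (hP : IsEvenNCP ℓ x r P) :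
    ∃ T : List Domino, IsAdmissibleC T ∧ shapeOf T = lam ∧ fibersOf ℓ x T = P := by
  obtain ⟨⟨⟨hne, hsub, huniq⟩, hnc⟩, heven⟩ := hP
  obtain ⟨M, hMdef⟩ : ∃ M, M = lam.sum := ⟨_, rfl⟩
  have hleM : ∀ m ∈ lam, m ≤ M := fun m hm => hMdef ▸ Multiset.le_sum_of_mem hm
  have hcnt := colH_eq lam
  have hBlam : ∀ t, InB (colH lam) t ↔ 2 * t ∈ Blam ℓ x := by
    intro t
    unfold InB Blam
    simp only [Finset.mem_insert, Finset.mem_image]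
    constructor
    · rintro (h | h)
      · left; omega
      · right
        have h1 := hcnt (2 * t)
        have h2 : 2 * t ∈ lam := Multiset.count_pos.1 (by omega)
        obtain ⟨i, hi, hti⟩ := honly _ h2 (even_two_mul t)
        exact ⟨i, hi, hti.symm⟩
    · rintro (h | ⟨i, hi, h⟩)
      · left; omega
      · right
        have h1 := hcnt (2 * t)
        have h2 := hcount i hi
        have h3 := hr i hi
        rw [h] at h2
        omega
  have hBeven : ∀ v ∈ Blam ℓ x, ∃ t, v = 2 * t := by
    intro v hv
    simp only [Blam, Finset.mem_insert, Finset.mem_image] at hv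
    rcases hv with rfl | ⟨i, _, rfl⟩
    · exact ⟨0, rfl⟩
    · exact ⟨x i, rfl⟩
  obtain ⟨κ, hκdef⟩ : ∃ κ : ℕ → Finset ℕ, κ = fun t => (P.filter (fun L => 2 * t ∈ L)).sup id :=
    ⟨_, rfl⟩
  have hκ : ∀ t, ∀ L ∈ P, 2 * t ∈ L → κ t = L := by
    intro t L hL ht
    have : P.filter (fun L => 2 * t ∈ L) = {L} := by
      ext L'
      simp only [Finset.mem_filter, Finset.mem_singleton]
      constructor
      · intro h'
        exact (huniq (2 * t) (hsub L hL ht)).unique h' ⟨hL, ht⟩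
      · rintro rfl
        exact ⟨hL, ht⟩
    rw [hκdef]
    simp [this]
  have hκP : ∀ t, InB (colH lam) t → κ t ∈ P ∧ 2 * t ∈ κ t := by
    intro t ht
    obtain ⟨L, hL, _⟩ := huniq (2 * t) ((hBlam t).1 ht)
    rw [hκ t L hL.1 hL.2]
    exact hL
  have hSt : St M (colH lam) κ := by
    refine ⟨?_, ?_, ?_, ?_, ?_⟩
    · intro j _
      have := hcnt j
      omega
    · intro j hj
      unfold colH
      rw [Multiset.countP_eq_zero]
      intro m hm hjm
      have := hleM m hm
      omega
    · intro t
      have h1 := hcnt (2 * t + 1)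
      have h2 := hC.2 (2 * t + 1) (odd_two_mul_add_one t)
      rw [Nat.even_iff] at h2 ⊢
      rw [show 2 * t + 1 + 1 = 2 * t + 2 by ring] at h1
      omega
    · intro a b c d ha hb hc hd hab hbc hcd hac hbd
      by_contra hne'
      have := hnc (κ a) (hκP a ha).1 (κ b) (hκP b hb).1 hne' (2 * a) (hκP a ha).2 (2 * c)
        (hac ▸ (hκP c hc).2) (2 * b) (hκP b hb).2 (2 * d) (hbd ▸ (hκP d hd).2) (by omega)
        (by omega)
      rcases this with h | h | h
      · have h1 : 2 * b ∈ Finset.Icc (2 * a) (2 * c) ∩ Finset.Icc (2 * b) (2 * d) := by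
          simp only [Finset.mem_inter, Finset.mem_Icc]; omega
        rw [h] at h1
        simp at h1
      · have h1 := h (show 2 * a ∈ Finset.Icc (2 * a) (2 * c) by
          simp only [Finset.mem_Icc]; omega)
        simp only [Finset.mem_Icc] at h1
        omega
      · have h1 := h (show 2 * d ∈ Finset.Icc (2 * b) (2 * d) by
          simp only [Finset.mem_Icc]; omega)
        simp only [Finset.mem_Icc] at h1
        omega
    · intro m hm hm0
      obtain ⟨hL, hmL⟩ := hκP m hm
      have h0L : 0 ∉ κ m := fun h0 => hm0 (hκ 0 (κ m) hL h0).symm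
      have hev := heven (κ m) hL h0L
      generalize κ m = L at hL hmL h0L hev
      have hterm : ∀ t ∈ Finset.Icc 1 M,
          (if κ t = L then ((colH lam (2 * t) + colH lam (2 * t + 1) : ℕ) : ZMod 2) else 0) =
          if 2 * t ∈ L then ((lam.count (2 * t) : ℕ) : ZMod 2) else 0 := by
        intro t _
        have hc1 : ((colH lam (2 * t) + colH lam (2 * t + 1) : ℕ) : ZMod 2) =
            ((lam.count (2 * t) : ℕ) : ZMod 2) := by
          apply cast_congr
          have := hcnt (2 * t)
          omega
        rw [hc1]
        by_cases htL : 2 * t ∈ L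
        · rw [if_pos htL, if_pos (hκ t L hL htL)]
        · rw [if_neg htL]
          by_cases htB : InB (colH lam) t
          · rw [if_neg]
            rintro rfl
            exact htL (hκP t htB).2
          · have : lam.count (2 * t) = 0 := by
              have h1 := hcnt (2 * t)
              unfold InB at htB
              push Not at htB
              omega
            simp [this]
      rw [Finset.sum_congr rfl hterm]
      have hinj : Set.InjOn x (Finset.Icc 1 ℓ : Finset ℕ) := by
        intro i hi j hj hij
        rcases lt_trichotomy i j with h | h | h
        · have := hx i hi j hj h
          omega
        · exact h
        · have := hx j hj i hi h
          omega
      have hsubset : (Finset.Icc 1 ℓ).image x ⊆ Finset.Icc 1 M := by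
        intro t ht
        obtain ⟨i, hi, rfl⟩ := Finset.mem_image.1 ht
        have h1 := hcount i hi
        have h2 := hr i hi
        have h3 := hleM (2 * x i) (Multiset.count_pos.1 (by omega))
        have h4 := hxpos i hi
        rw [Finset.mem_Icc]
        omega
      rw [← Finset.sum_subset hsubset, Finset.sum_image hinj]
      · have : ∀ i ∈ Finset.Icc 1 ℓ, (if 2 * x i ∈ L then ((lam.count (2 * x i) : ℕ) : ZMod 2)
            else 0) = if 2 * x i ∈ L then ((r i : ℕ) : ZMod 2) else 0 := by
          intro i hi
          rw [hcount i hi]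
        rw [Finset.sum_congr rfl this, ← Finset.sum_filter, ← Nat.cast_sum,
          ZMod.natCast_eq_zero_iff]
        exact hev.two_dvd
      · intro t _ ht
        by_cases htL : 2 * t ∈ L
        · have : lam.count (2 * t) = 0 := by
            rw [Multiset.count_eq_zero]
            intro hmem
            obtain ⟨i, hi, hti⟩ := honly _ hmem (even_two_mul t)
            apply ht
            rw [Finset.mem_image]
            exact ⟨i, hi, by omega⟩
          simp [this]
        · rw [if_neg htL]
  obtain ⟨T, hA, hF, hb⟩ := realize M _ _ _ hSt rfl
  refine ⟨T, hA, ?_, ?_⟩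
  · ext m
    rcases Nat.eq_zero_or_pos m with rfl | hm
    · rw [Multiset.count_eq_zero.2 (hF.zero_notMem_shape hSt.anti), Multiset.count_eq_zero.2]
      intro h0
      exact absurd (hpos 0 h0) (by omega)
    · rw [hF.count_shape hSt.anti hm]
      have := hcnt m
      omega
  · have hfib : ∀ L ∈ P, ∀ v ∈ L,
        (Blam ℓ x).filter (fun w => (clusterData T).2 w = (clusterData T).2 v) = L := by
      intro L hL v hv
      have hvB := hsub L hL hv
      obtain ⟨s, rfl⟩ := hBeven v hvB
      ext w
      rw [Finset.mem_filter]
      constructor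
      · rintro ⟨hw, hwv⟩
        obtain ⟨t, rfl⟩ := hBeven w hw
        have h1 := (hb t s ((hBlam t).2 hw) ((hBlam s).2 hvB)).1 hwv
        rw [hκ s L hL hv] at h1
        exact h1 ▸ (hκP t ((hBlam t).2 hw)).2
      · intro hw
        have hwB := hsub L hL hw
        obtain ⟨t, rfl⟩ := hBeven w hwB
        refine ⟨hwB, (hb t s ((hBlam t).2 hwB) ((hBlam s).2 hvB)).2 ?_⟩
        rw [hκ s L hL hv, hκ t L hL hw]
    unfold fibersOf
    ext L
    rw [Finset.mem_image]
    constructor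
    · rintro ⟨v, hv, rfl⟩
      obtain ⟨L, hL, _⟩ := huniq v hv
      rw [hfib L hL.1 v hL.2]
      exact hL.1
    · intro hL
      obtain ⟨v, hv⟩ := hne L hL
      exact ⟨v, hsub L hL hv, hfib L hL v hv⟩
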